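/- arXiv:2310.17267 — 2 statements merged into one kernel-verified Lean document; each statement's English description precedes it below -/
import Mathlib

section
/- Let A be an invertible 3×3 real matrix, let λ₃ be the largest eigenvalue of the Cauchy–Green tensor C = AᵀA, and let ξ₃ be a unit eigenvector of C for λ₃. Then for every nonzero vector w ∈ ℝ³, the unit vector e_w = w/|w| satisfies ⟨e_w, ξ₃⟩² ≤ |Aw|² / (λ₃ |w|²). (With A = ∇F_{t₀}^{t}(x₀) and w the initial vorticity, the right-hand side equals exp[2(VSE_{t₀}^{t} − FTLE_{t₀}^{t})(t − t₀)].) -/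
open scoped RealInnerProductSpace
open Matrix MeasureTheory Filter

/-- Action of a 3×3 real matrix on `ℝ³` with the Euclidean inner product. -/
noncomputable def mulE (A : Matrix (Fin 3) (Fin 3) ℝ) (x : EuclideanSpace ℝ (Fin 3)) :
    EuclideanSpace ℝ (Fin 3) :=
  Matrix.toEuclideanLin A x

section AdjointCompSelf

open scoped InnerProductSpace InnerProduct

variable {𝕜 E F : Type*} [RCLike 𝕜]
  [NormedAddCommGroup E] [InnerProductSpace 𝕜 E] [CompleteSpace E]
  [NormedAddCommGroup F] [InnerProductSpace 𝕜 F] [CompleteSpace F]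

theorem inner_map_map_of_adjoint_comp_self_apply_eq_smul (T : E →L[𝕜] F) {μ : ℝ} {ξ : E}
    (heig : (T† ∘L T) ξ = (μ : 𝕜) • ξ) (w : E) :
    ⟪T ξ, T w⟫_𝕜 = μ * ⟪ξ, w⟫_𝕜 := by
  calc ⟪T ξ, T w⟫_𝕜 = ⟪(T† ∘L T) ξ, w⟫_𝕜 := (T.adjoint_inner_left w (T ξ)).symm
    _ = μ * ⟪ξ, w⟫_𝕜 := by rw [heig, inner_smul_left, RCLike.conj_ofReal]

theorem norm_map_sq_of_adjoint_comp_self_apply_eq_smul (T : E →L[𝕜] F) {μ : ℝ} {ξ : E}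
    (heig : (T† ∘L T) ξ = (μ : 𝕜) • ξ) :
    ‖T ξ‖ ^ 2 = μ * ‖ξ‖ ^ 2 := by
  have h := inner_map_map_of_adjoint_comp_self_apply_eq_smul T heig ξ
  rw [inner_self_eq_norm_sq_to_K, inner_self_eq_norm_sq_to_K] at h
  exact_mod_cast h

theorem pos_of_adjoint_comp_self_apply_eq_smul {T : E →L[𝕜] F} {μ : ℝ} {ξ : E}
    (hTξ : T ξ ≠ 0) (heig : (T† ∘L T) ξ = (μ : 𝕜) • ξ) : 0 < μ := by
  have h : 0 < μ * ‖ξ‖ ^ 2 := by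
    rw [← norm_map_sq_of_adjoint_comp_self_apply_eq_smul T heig]
    positivity
  exact pos_of_mul_pos_left h (by positivity)

theorem mul_norm_inner_sq_le_norm_map_sq_mul (T : E →L[𝕜] F) {μ : ℝ} {ξ : E}
    (heig : (T† ∘L T) ξ = (μ : 𝕜) • ξ) (w : E) :
    μ * ‖⟪ξ, w⟫_𝕜‖ ^ 2 ≤ ‖T w‖ ^ 2 * ‖ξ‖ ^ 2 := by
  obtain hμ | hμ := le_or_gt μ 0
  · exact (mul_nonpos_of_nonpos_of_nonneg hμ (by positivity)).trans (by positivity)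
  · refine le_of_mul_le_mul_left ?_ hμ
    calc μ * (μ * ‖⟪ξ, w⟫_𝕜‖ ^ 2) = ‖⟪T ξ, T w⟫_𝕜‖ ^ 2 := by
          rw [inner_map_map_of_adjoint_comp_self_apply_eq_smul T heig, norm_mul,
            RCLike.norm_ofReal, mul_pow, sq_abs]
          ring
      _ ≤ (‖T ξ‖ * ‖T w‖) ^ 2 := by gcongr; exact norm_inner_le_norm _ _
      _ = μ * (‖T w‖ ^ 2 * ‖ξ‖ ^ 2) := by
          rw [mul_pow, norm_map_sq_of_adjoint_comp_self_apply_eq_smul T heig]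
          ring

theorem stmt_1_general {T : E →L[𝕜] F} {μ : ℝ} {ξ : E} (hξ : ‖ξ‖ = 1) (hTξ : T ξ ≠ 0)
    (heig : (T† ∘L T) ξ = (μ : 𝕜) • ξ) {w : E} (hw : w ≠ 0) :
    ‖⟪((‖w‖⁻¹ : ℝ) : 𝕜) • w, ξ⟫_𝕜‖ ^ 2 ≤ ‖T w‖ ^ 2 / (μ * ‖w‖ ^ 2) := by
  have hμ : 0 < μ := pos_of_adjoint_comp_self_apply_eq_smul hTξ heig
  rw [le_div_iff₀ (by positivity)]
  calc ‖⟪((‖w‖⁻¹ : ℝ) : 𝕜) • w, ξ⟫_𝕜‖ ^ 2 * (μ * ‖w‖ ^ 2) = μ * ‖⟪ξ, w⟫_𝕜‖ ^ 2 := by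
        rw [inner_smul_left, RCLike.conj_ofReal, norm_mul, RCLike.norm_ofReal, mul_pow, sq_abs,
          norm_inner_symm]
        field_simp
    _ ≤ ‖T w‖ ^ 2 * ‖ξ‖ ^ 2 := mul_norm_inner_sq_le_norm_map_sq_mul T heig w
    _ = ‖T w‖ ^ 2 := by rw [hξ, one_pow, mul_one]

end AdjointCompSelf

section ToEuclideanCLM

open scoped InnerProduct

variable {𝕜 n : Type*} [RCLike 𝕜] [Fintype n] [DecidableEq n]

theorem toEuclideanCLM_conjTranspose_mul_self (A : Matrix n n 𝕜) :
    toEuclideanCLM (𝕜 := 𝕜) (Aᴴ * A) =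
      (toEuclideanCLM (𝕜 := 𝕜) A)† ∘L toEuclideanCLM (𝕜 := 𝕜) A := by
  rw [← star_eq_conjTranspose, map_mul, map_star, ContinuousLinearMap.star_eq_adjoint,
    ContinuousLinearMap.mul_def]

theorem toEuclideanCLM_injective_of_isUnit {A : Matrix n n 𝕜} (hA : IsUnit A) :
    Function.Injective (toEuclideanCLM (𝕜 := 𝕜) A) :=
  (ContinuousLinearMap.isUnit_iff_bijective.mp (hA.map (toEuclideanCLM (𝕜 := 𝕜)))).injective

theorem mulE_eq_toEuclideanCLM_apply (A : Matrix (Fin 3) (Fin 3) ℝ)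
    (x : EuclideanSpace ℝ (Fin 3)) : mulE A x = toEuclideanCLM (𝕜 := ℝ) A x :=
  rfl

end ToEuclideanCLM

/-- for `λ₃` the largest eigenvalue of `C = AᵀA` with unit eigenvector `ξ₃`
and any nonzero `w`, the unit vector `e_w = w/|w|` satisfies
`⟨e_w, ξ₃⟩² ≤ |Aw|² / (λ₃ |w|²)`. -/
theorem stmt_1 (A : Matrix (Fin 3) (Fin 3) ℝ) (hA : IsUnit A)
    (lam3 : ℝ) (xi3 : EuclideanSpace ℝ (Fin 3)) (hunit : ‖xi3‖ = 1)
    (heig : mulE (Aᵀ * A) xi3 = lam3 • xi3)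
    (hmax : ∀ (μ : ℝ) (v : EuclideanSpace ℝ (Fin 3)), v ≠ 0 →
      mulE (Aᵀ * A) v = μ • v → μ ≤ lam3)
    (w : EuclideanSpace ℝ (Fin 3)) (hw : w ≠ 0) :
    ⟪‖w‖⁻¹ • w, xi3⟫ ^ 2 ≤ ‖mulE A w‖ ^ 2 / (lam3 * ‖w‖ ^ 2) := by
  have hAxi3 : toEuclideanCLM (𝕜 := ℝ) A xi3 ≠ 0 :=
    (map_ne_zero_iff _ (toEuclideanCLM_injective_of_isUnit hA)).mpr
      (norm_ne_zero_iff.mp (by simp [hunit]))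
  rw [mulE_eq_toEuclideanCLM_apply, ← conjTranspose_eq_transpose_of_trivial,
    toEuclideanCLM_conjTranspose_mul_self] at heig
  simpa [mulE_eq_toEuclideanCLM_apply] using stmt_1_general hunit hAxi3 heig hw
end

section
/- (Theorem 1.) Fix t₀ ∈ ℝ and a nonzero ω₀ ∈ ℝ³. Let A : ℝ → GL(3, ℝ) be a family of invertible 3×3 matrices with A(t₀) = Id; for each t let λ₃(t) be the largest eigenvalue of A(t)ᵀA(t) and ξ₃(t) a unit eigenvector for λ₃(t). Assume: (i) |A(t) ω₀| ≤ M < ∞ for all t ∈ ℝ; (ii) the maximal forward and backward Lyapunov exponents exist and are positive: (1/(2(t−t₀))) log λ₃(t) → μ₃^± with 0 < μ₃^± < ∞ as t → ±∞; (iii) the dominant forward and backward Lyapunov vectors exist: ξ₃(t) → ζ₃^± as t → ±∞; (iv) the non-degeneracy condition ζ₃⁺ ∦ ζ₃⁻ holds. Define n = ζ₃⁺ × ζ₃⁻. Then ω₀ is parallel to n, i.e. there exists c ∈ ℝ with ω₀ = c · n. -/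
open scoped RealInnerProductSpace
open Matrix MeasureTheory Filter

/-- Cross product on `ℝ³` viewed as a Euclidean space. -/
noncomputable def cross3 (x y : EuclideanSpace ℝ (Fin 3)) : EuclideanSpace ℝ (Fin 3) :=
  (WithLp.equiv 2 (Fin 3 → ℝ)).symm
    (crossProduct ((WithLp.equiv 2 (Fin 3 → ℝ)) x) ((WithLp.equiv 2 (Fin 3 → ℝ)) y))

/-!
An eigenvector `v` of `T† T` with eigenvalue `a` satisfies `a ⟪v, w⟫ = ⟪T v, T w⟫`, and
`‖T v‖² = a ‖v‖²`, so Cauchy–Schwarz gives `a ⟪v, w⟫² ≤ ‖v‖² ‖T w‖²`. If `T w` stays bounded while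
`a → ∞`, then `w` is orthogonal to every limit of the eigenvectors. A positive Lyapunov exponent
forces `λ₃(t) → ∞`, so the vorticity is orthogonal to both `ζ₃⁺` and `ζ₃⁻`, hence parallel to their
cross product.
-/

section AdjointEigenvector

open ContinuousLinearMap RCLike

variable {𝕜 E F : Type*} [RCLike 𝕜]
  [NormedAddCommGroup E] [InnerProductSpace 𝕜 E] [CompleteSpace E]
  [NormedAddCommGroup F] [InnerProductSpace 𝕜 F] [CompleteSpace F]

lemma inner_map_map_of_adjoint_apply_eq_smul {T : E →L[𝕜] F} {a : ℝ} {v : E}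
    (hv : adjoint T (T v) = (a : 𝕜) • v) (w : E) : inner 𝕜 (T v) (T w) = a * inner 𝕜 v w := by
  rw [← adjoint_inner_left, hv, inner_smul_left, conj_ofReal]

lemma norm_map_sq_of_adjoint_apply_eq_smul {T : E →L[𝕜] F} {a : ℝ} {v : E}
    (hv : adjoint T (T v) = (a : 𝕜) • v) : ‖T v‖ ^ 2 = a * ‖v‖ ^ 2 := by
  have h := inner_map_map_of_adjoint_apply_eq_smul hv v
  rw [inner_self_eq_norm_sq_to_K, inner_self_eq_norm_sq_to_K] at h
  exact_mod_cast h

lemma nonneg_of_adjoint_apply_eq_smul {T : E →L[𝕜] F} {a : ℝ} {v : E}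
    (hv : adjoint T (T v) = (a : 𝕜) • v) (hv₀ : v ≠ 0) : 0 ≤ a := by
  refine nonneg_of_mul_nonneg_left ?_ (pow_pos (norm_pos_iff.2 hv₀) 2)
  exact norm_map_sq_of_adjoint_apply_eq_smul hv ▸ sq_nonneg _

lemma mul_norm_inner_sq_le_of_adjoint_apply_eq_smul {T : E →L[𝕜] F} {a : ℝ} {v : E}
    (hv : adjoint T (T v) = (a : 𝕜) • v) (w : E) :
    a * ‖inner 𝕜 v w‖ ^ 2 ≤ ‖v‖ ^ 2 * ‖T w‖ ^ 2 := by
  rcases le_or_gt a 0 with ha | ha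
  · exact (mul_nonpos_of_nonpos_of_nonneg ha (sq_nonneg _)).trans (by positivity)
  refine le_of_mul_le_mul_left ?_ ha
  calc a * (a * ‖inner 𝕜 v w‖ ^ 2) = ‖inner 𝕜 (T v) (T w)‖ ^ 2 := by
        rw [inner_map_map_of_adjoint_apply_eq_smul hv, norm_mul, norm_ofReal, mul_pow, sq_abs]
        ring
    _ ≤ (‖T v‖ * ‖T w‖) ^ 2 := by gcongr; exact norm_inner_le_norm _ _
    _ = a * (‖v‖ ^ 2 * ‖T w‖ ^ 2) := by
        rw [mul_pow, norm_map_sq_of_adjoint_apply_eq_smul hv, mul_assoc]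

theorem inner_eq_zero_of_tendsto_of_adjoint_apply_eq_smul {ι : Type*} {l : Filter ι} [l.NeBot]
    {T : ι → E →L[𝕜] F} {a : ι → ℝ} {v : ι → E} {v₀ w : E} {M : ℝ}
    (heig : ∀ᶠ i in l, adjoint (T i) (T i (v i)) = (a i : 𝕜) • v i)
    (hbound : ∀ᶠ i in l, ‖T i w‖ ≤ M) (ha : Tendsto a l atTop) (hv : Tendsto v l (nhds v₀)) :
    inner 𝕜 v₀ w = 0 := by
  have hle : ∀ᶠ i in l, ‖inner 𝕜 (v i) w‖ ^ 2 ≤ ‖v i‖ ^ 2 * M ^ 2 / a i := by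
    filter_upwards [heig, hbound, ha.eventually_gt_atTop 0] with i hi hM hpos
    rw [le_div_iff₀' hpos]
    exact (mul_norm_inner_sq_le_of_adjoint_apply_eq_smul hi w).trans (by gcongr)
  have hlim : Tendsto (fun i => ‖v i‖ ^ 2 * M ^ 2 / a i) l (nhds 0) :=
    ((hv.norm.pow 2).mul_const _).div_atTop ha
  have hinner : Tendsto (fun i => ‖inner 𝕜 (v i) w‖ ^ 2) l (nhds (‖inner 𝕜 v₀ w‖ ^ 2)) :=
    (hv.inner tendsto_const_nhds).norm.pow 2
  simpa using (le_of_tendsto_of_tendsto hinner hlim hle).antisymm (sq_nonneg _)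

end AdjointEigenvector

lemma exists_eq_smul_crossProduct_of_dotProduct_eq_zero {K : Type*} [Field K] {u v w : Fin 3 → K}
    (huv : LinearIndependent K ![u, v]) (hu : u ⬝ᵥ w = 0) (hv : v ⬝ᵥ w = 0) :
    ∃ c : K, w = c • crossProduct u v := by
  have hcross : crossProduct (crossProduct u v) w = 0 := by
    rw [cross_cross_eq_smul_sub_smul, hu, hv, zero_smul, zero_smul, sub_zero]
  have hdep : ¬ LinearIndependent K ![crossProduct u v, w] :=
    mt crossProduct_ne_zero_iff_linearIndependent.2 (not_not.2 hcross)
  rw [LinearIndependent.pair_iff' (crossProduct_ne_zero_iff_linearIndependent.2 huv)] at hdep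
  push Not at hdep
  exact hdep.imp fun _ => Eq.symm

lemma exists_eq_smul_cross3_of_inner_eq_zero {u v w : EuclideanSpace ℝ (Fin 3)}
    (huv : LinearIndependent ℝ ![u, v]) (hu : ⟪u, w⟫ = 0) (hv : ⟪v, w⟫ = 0) :
    ∃ c : ℝ, w = c • cross3 u v := by
  rw [real_inner_comm] at hu hv
  have huv' : LinearIndependent ℝ ![u.ofLp, v.ofLp] := by
    rw [LinearIndependent.pair_iff] at huv ⊢
    exact fun s t h => huv s t (congrArg (WithLp.toLp 2) h)
  obtain ⟨c, hc⟩ := exists_eq_smul_crossProduct_of_dotProduct_eq_zero huv' hu hv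
  exact ⟨c, congrArg (WithLp.toLp 2) hc⟩

lemma mulE_transpose_mul_self (A : Matrix (Fin 3) (Fin 3) ℝ) (x : EuclideanSpace ℝ (Fin 3)) :
    mulE (Aᵀ * A) x =
      (toEuclideanCLM (𝕜 := ℝ) A).adjoint (toEuclideanCLM (𝕜 := ℝ) A x) := by
  rw [← ContinuousLinearMap.star_eq_adjoint, ← map_star, star_eq_conjTranspose,
    conjTranspose_eq_transpose_of_trivial, ← ContinuousLinearMap.comp_apply,
    ← ContinuousLinearMap.mul_def, ← map_mul]
  rfl

lemma tendsto_atTop_of_tendsto_log_div {α : Type*} {l : Filter α} {f g : α → ℝ} {μ : ℝ}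
    (hf : ∀ x, 0 ≤ f x) (hg : Tendsto g l atTop) (hμ : 0 < μ)
    (hlim : Tendsto (fun x => Real.log (f x) / g x) l (nhds μ)) : Tendsto f l atTop :=
  tendsto_atTop_mono (fun x => Real.log_le_self (hf x)) (hg.num hμ hlim)

lemma tendsto_eigenvalue_atTop_of_lyapunov_exponent_pos {l : Filter ℝ}
    (hl : l ≤ Bornology.cobounded ℝ) {A : ℝ → Matrix (Fin 3) (Fin 3) ℝ} {lam : ℝ → ℝ}
    {xi : ℝ → EuclideanSpace ℝ (Fin 3)} (hxi : ∀ t, xi t ≠ 0)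
    (heig : ∀ t, mulE ((A t)ᵀ * A t) (xi t) = lam t • xi t) {t₀ μ : ℝ} (hμ : 0 < μ)
    (hLyap : Tendsto (fun t => Real.log (lam t) / (2 * |t - t₀|)) l (nhds μ)) :
    Tendsto lam l atTop := by
  have hlam (t : ℝ) : 0 ≤ lam t := nonneg_of_adjoint_apply_eq_smul
    ((mulE_transpose_mul_self _ _).symm.trans (heig t)) (hxi t)
  have htime : Tendsto (fun t => 2 * |t - t₀|) l atTop :=
    ((Metric.tendsto_dist_right_cobounded_atTop t₀).mono_left hl).const_mul_atTop two_pos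
  exact tendsto_atTop_of_tendsto_log_div hlam htime hμ hLyap

theorem stmt_3_general {ι : Type*} {l l' : Filter ι} [l.NeBot] [l'.NeBot]
    {ω₀ : EuclideanSpace ℝ (Fin 3)} {A : ι → Matrix (Fin 3) (Fin 3) ℝ}
    {lam : ι → ℝ} {xi : ι → EuclideanSpace ℝ (Fin 3)}
    (heig : ∀ i, mulE ((A i)ᵀ * A i) (xi i) = lam i • xi i)
    {M : ℝ} (hbound : ∀ i, ‖mulE (A i) ω₀‖ ≤ M)
    (hlam : Tendsto lam l atTop) (hlam' : Tendsto lam l' atTop)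
    {ζ ζ' : EuclideanSpace ℝ (Fin 3)}
    (hvec : Tendsto xi l (nhds ζ)) (hvec' : Tendsto xi l' (nhds ζ'))
    (hnd : LinearIndependent ℝ ![ζ, ζ']) :
    ∃ c : ℝ, ω₀ = c • cross3 ζ ζ' := by
  simp only [mulE_transpose_mul_self] at heig
  exact exists_eq_smul_cross3_of_inner_eq_zero hnd
    (inner_eq_zero_of_tendsto_of_adjoint_apply_eq_smul (.of_forall heig) (.of_forall hbound)
      hlam hvec)
    (inner_eq_zero_of_tendsto_of_adjoint_apply_eq_smul (.of_forall heig) (.of_forall hbound)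
      hlam' hvec')

/-- Theorem 1: with bounded vorticity `ω(t) = A(t) ω₀`, positive forward and
backward maximal Lyapunov exponents, existing dominant forward/backward Lyapunov vectors
`ζ₃^±` that are not parallel, the vorticity `ω₀` is parallel to `n = ζ₃⁺ × ζ₃⁻`.
(The Lyapunov exponents are `lim_{t→±∞} log λ₃(t) / (2|t−t₀|)`, as in the paper.) -/
theorem stmt_3 (t₀ : ℝ) (ω₀ : EuclideanSpace ℝ (Fin 3)) (hω₀ : ω₀ ≠ 0)
    (A : ℝ → Matrix (Fin 3) (Fin 3) ℝ)
    (hAinv : ∀ t, IsUnit (A t)) (hA0 : A t₀ = 1)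
    (lam3 : ℝ → ℝ) (xi3 : ℝ → EuclideanSpace ℝ (Fin 3))
    (hunit : ∀ t, ‖xi3 t‖ = 1)
    (heig : ∀ t, mulE ((A t)ᵀ * A t) (xi3 t) = lam3 t • xi3 t)
    (hmax : ∀ t, ∀ (μ : ℝ) (v : EuclideanSpace ℝ (Fin 3)), v ≠ 0 →
      mulE ((A t)ᵀ * A t) v = μ • v → μ ≤ lam3 t)
    (M : ℝ) (hbound : ∀ t, ‖mulE (A t) ω₀‖ ≤ M)
    (μ₃p μ₃m : ℝ) (hμp : 0 < μ₃p) (hμm : 0 < μ₃m)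
    (hLyapP : Tendsto (fun t => Real.log (lam3 t) / (2 * |t - t₀|)) atTop (nhds μ₃p))
    (hLyapM : Tendsto (fun t => Real.log (lam3 t) / (2 * |t - t₀|)) atBot (nhds μ₃m))
    (ζ₃p ζ₃m : EuclideanSpace ℝ (Fin 3))
    (hvecP : Tendsto xi3 atTop (nhds ζ₃p))
    (hvecM : Tendsto xi3 atBot (nhds ζ₃m))
    (hnd : LinearIndependent ℝ ![ζ₃p, ζ₃m]) :
    ∃ c : ℝ, ω₀ = c • cross3 ζ₃p ζ₃m := by
  have hxi (t : ℝ) : xi3 t ≠ 0 := ne_zero_of_norm_ne_zero (by simp [hunit])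
  have hlamP := tendsto_eigenvalue_atTop_of_lyapunov_exponent_pos
    IsOrderBornology.atTop_le_cobounded hxi heig hμp hLyapP
  have hlamM := tendsto_eigenvalue_atTop_of_lyapunov_exponent_pos
    IsOrderBornology.atBot_le_cobounded hxi heig hμm hLyapM
  exact stmt_3_general heig hbound hlamP hlamM hvecP hvecM hnd
end
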